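/- arXiv:1403.2973 — 5 statements merged into one kernel-verified Lean document; each statement's English description precedes it below -/
import Mathlib

section
/- Fix c > 0, γ ∈ (0,1) and a > 0, and define Ω on the even integers by Ω(0) = 1 and Ω(k) = exp(c·|k|^γ)·|k|^{−a} for even k ≠ 0. Then Ω is almost submultiplicative: there is a constant C ≥ 1 with Ω(k+m) ≤ C·Ω(k)·Ω(m) for all even k, m. Moreover, if a ≤ c·γ·(1−γ)·2^γ, then Ω is submultiplicative, i.e. Ω(k+m) ≤ Ω(k)·Ω(m) for all even k, m. -/
lemma aux_incr {S : Set ℝ} {f : ℝ → ℝ} (hf : ConcaveOn ℝ S f) {x y h : ℝ} (hx : x ∈ S)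
    (hyh : y + h ∈ S) (hxy : x ≤ y) (hh : 0 < h) : f (y + h) + f x ≤ f (x + h) + f y := by
  have hd : 0 < y + h - x := by linarith
  set t := h / (y + h - x) with ht
  have ht0 : 0 ≤ t := by positivity
  have ht1 : t ≤ 1 := by rw [ht, div_le_one hd]; linarith
  have hth : t * (y + h - x) = h := by rw [ht]; field_simp
  have h1 := hf.2 hx hyh ht0 (sub_nonneg.2 ht1) (by ring)
  have h2 := hf.2 hx hyh (sub_nonneg.2 ht1) ht0 (by ring)
  simp only [smul_eq_mul] at h1 h2
  have e1 : t * x + (1 - t) * (y + h) = y := by linarith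
  have e2 : (1 - t) * x + t * (y + h) = x + h := by linarith
  rw [e1] at h1
  rw [e2] at h2
  linarith

lemma aux_rpow {γ x y : ℝ} (h0 : 0 < γ) (h1 : γ < 1) (hx : 0 < x) (hxy : x ≤ y) :
    (x + y) ^ γ ≤ x ^ γ + y ^ γ - (2 - 2 ^ γ) * x ^ γ := by
  have h := aux_incr (Real.concaveOn_rpow h0.le h1.le) (x := x) (y := y) (h := x)
    hx.le (show (0:ℝ) ≤ y + x by linarith) hxy hx
  have e : (x + x) ^ γ = 2 ^ γ * x ^ γ := by
    rw [← two_mul, Real.mul_rpow (by norm_num) hx.le]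
  rw [e, add_comm y x] at h
  linarith

lemma aux_concave {c γ a : ℝ} (hc : 0 < c) (h0 : 0 < γ) (h1 : γ < 1)
    (h : a ≤ c * γ * (1 - γ) * (2:ℝ) ^ γ) :
    ConcaveOn ℝ (Set.Ici 2) (fun x : ℝ => c * x ^ γ - a * Real.log x) := by
  have key : ∀ x ∈ interior (Set.Ici (2:ℝ)), 2 < x := by
    intro x hx; simpa using hx
  apply concaveOn_of_hasDerivWithinAt2_nonpos (convex_Ici 2)
    (f' := fun x => c * (γ * x ^ (γ - 1)) - a * x⁻¹)
    (f'' := fun x => c * (γ * ((γ - 1) * x ^ (γ - 1 - 1))) - a * (-(x ^ 2)⁻¹))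
  · intro x hx
    have hx' : (2:ℝ) ≤ x := hx
    have hx0 : x ≠ 0 := by linarith
    exact (((Real.continuousAt_rpow_const x γ (Or.inl hx0)).const_mul c).sub
      ((Real.continuousAt_log hx0).const_mul a)).continuousWithinAt
  · intro x hx
    have hx0 : x ≠ 0 := by linarith [key x hx]
    exact (((Real.hasDerivAt_rpow_const (Or.inl hx0)).const_mul c).sub
      ((Real.hasDerivAt_log hx0).const_mul a)).hasDerivWithinAt
  · intro x hx
    have hx0 : x ≠ 0 := by linarith [key x hx]
    exact ((((Real.hasDerivAt_rpow_const (Or.inl hx0)).const_mul γ).const_mul c).sub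
      ((hasDerivAt_inv hx0).const_mul a)).hasDerivWithinAt
  · intro x hx
    have hx2 := key x hx
    have hx0 : 0 < x := by linarith
    have e : x ^ (γ - 1 - 1) = x ^ γ * (x ^ 2)⁻¹ := by
      rw [Real.rpow_sub hx0, Real.rpow_sub hx0, Real.rpow_one]
      field_simp
    have hm : (2:ℝ) ^ γ ≤ x ^ γ := Real.rpow_le_rpow (by norm_num) hx2.le h0.le
    have hp : 0 ≤ c * γ * (1 - γ) := mul_nonneg (by positivity) (by linarith)
    have h3 : a ≤ c * γ * (1 - γ) * x ^ γ := h.trans (mul_le_mul_of_nonneg_left hm hp)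
    have h4 : 0 ≤ (x ^ 2)⁻¹ := by positivity
    simp only [e]
    nlinarith [mul_nonneg (sub_nonneg.2 h3) h4]

lemma aux_mono {c γ a s t : ℝ} (hc : 0 < c) (h0 : 0 < γ) (h1 : γ < 1)
    (h : a ≤ c * γ * (1 - γ) * (2:ℝ) ^ γ) (hs : 2 ≤ s) (hst : s ≤ t) :
    c * s ^ γ - a * Real.log s ≤ c * t ^ γ - a * Real.log t := by
  have hs0 : 0 < s := by linarith
  have ht0 : 0 < t := by linarith
  have hL : 0 ≤ Real.log t - Real.log s := sub_nonneg.2 (Real.log_le_log hs0 hst)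
  set L := Real.log t - Real.log s
  have e : t ^ γ = s ^ γ * Real.exp (γ * L) := by
    rw [Real.rpow_def_of_pos ht0, Real.rpow_def_of_pos hs0, ← Real.exp_add]
    congr 1; simp only [L]; ring
  have hE := Real.add_one_le_exp (γ * L)
  have hm : (2:ℝ) ^ γ ≤ s ^ γ := Real.rpow_le_rpow (by norm_num) hs h0.le
  have hsp : 0 < s ^ γ := by positivity
  have h2 : a ≤ c * γ * s ^ γ := by
    have hp : 0 ≤ c * γ * (1 - γ) := mul_nonneg (by positivity) (by linarith)
    have h3 := mul_le_mul_of_nonneg_left hm hp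
    have : 0 ≤ c * γ * γ * s ^ γ := by positivity
    nlinarith
  have h5 := mul_le_mul_of_nonneg_left hE (mul_pos hc hsp).le
  have h6 := mul_le_mul_of_nonneg_right h2 hL
  have : a * L = a * Real.log t - a * Real.log s := by simp only [L]; ring
  rw [e]
  nlinarith

lemma aux_sub {c γ a x y : ℝ} (hc : 0 < c) (h0 : 0 < γ) (h1 : γ < 1)
    (h : a ≤ c * γ * (1 - γ) * (2:ℝ) ^ γ) (hx : 2 ≤ x) (hy : 2 ≤ y) :
    c * (x + y) ^ γ - a * Real.log (x + y) ≤
      (c * x ^ γ - a * Real.log x) + (c * y ^ γ - a * Real.log y) := by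
  have hf := aux_concave hc h0 h1 h
  have i1 := aux_incr hf (x := 2) (y := x) (h := y) (Set.mem_Ici.2 le_rfl)
    (Set.mem_Ici.2 (by linarith)) hx (by linarith)
  have i2 := aux_incr hf (x := 2) (y := y) (h := 2) (Set.mem_Ici.2 le_rfl)
    (Set.mem_Ici.2 (by linarith)) hy (by linarith)
  rw [add_comm y 2] at i2
  have e4 : Real.log (2 + 2) = 2 * Real.log 2 := by
    rw [← two_mul, Real.log_mul (by norm_num) (by norm_num)]; ring
  have r := aux_rpow h0 h1 (x := 2) (y := 2) (by norm_num) le_rfl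
  have h2 : (2:ℝ) ^ γ ≤ 2 := by
    simpa using Real.rpow_le_rpow_of_exponent_le (x := 2) (by norm_num) h1.le
  have : 0 < (2:ℝ) ^ γ := by positivity
  have r2 : (2 + 2 : ℝ) ^ γ ≤ 2 * 2 ^ γ := by nlinarith
  have r3 := mul_le_mul_of_nonneg_left r2 hc.le
  rw [e4] at i2
  nlinarith

lemma aux_two {c γ a x : ℝ} (hc : 0 < c) (h0 : 0 < γ) (h1 : γ < 1) (ha : 0 < a)
    (h : a ≤ c * γ * (1 - γ) * (2:ℝ) ^ γ) (hx : 2 ≤ x) :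
    0 ≤ c * x ^ γ - a * Real.log x := by
  refine le_trans ?_ (aux_mono hc h0 h1 h le_rfl hx)
  have hl : Real.log 2 ≤ 1 := by linarith [Real.log_le_sub_one_of_pos (x := 2) (by norm_num)]
  have h3 : γ * (1 - γ) ≤ 1 := by nlinarith
  have h4 : 0 < c * (2:ℝ) ^ γ := by positivity
  nlinarith [mul_le_mul_of_nonneg_left h3 h4.le, mul_le_mul_of_nonneg_left hl ha.le]

lemma aux_K {c γ a : ℝ} (hc : 0 < c) (h0 : 0 < γ) (h1 : γ < 1) (ha : 0 < a) :
    ∃ K : ℝ, 0 ≤ K ∧ ∀ p : ℝ, 0 < p →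
      2 * a * Real.log p ≤ c * (2 - 2 ^ γ) * p ^ γ + K := by
  have h2 : (2:ℝ) ^ γ < 2 := by
    simpa using Real.rpow_lt_rpow_of_exponent_lt (x := 2) (by norm_num) h1
  have hd : 0 < c * (2 - 2 ^ γ) := mul_pos hc (by linarith)
  set d := c * (2 - 2 ^ γ)
  set M := 2 * a / (γ * d) with hM
  have hMp : 0 < M := by positivity
  refine ⟨max 0 (2 * a / γ * Real.log M), le_max_left _ _, fun p hp => ?_⟩
  have hu : 0 < p ^ γ := by positivity
  have l1 := Real.log_le_sub_one_of_pos (div_pos hu hMp)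
  rw [Real.log_div hu.ne' hMp.ne', Real.log_rpow hp] at l1
  have l2 := le_max_right 0 (2 * a / γ * Real.log M)
  have hq : 0 < 2 * a / γ := by positivity
  have l3 := mul_le_mul_of_nonneg_left l1 hq.le
  have e1 : 2 * a / γ * (γ * Real.log p - Real.log M)
    = 2 * a * Real.log p - 2 * a / γ * Real.log M := by field_simp
  have e2 : 2 * a / γ * (p ^ γ / M - 1) = d * p ^ γ - 2 * a / γ := by
    rw [hM]; field_simp
  rw [e1, e2] at l3
  linarith

/-- `x ≤ y`, `s = |k+m| ≥ 2` -/
lemma aux_almost {c γ a K x y s : ℝ} (hc : 0 < c) (h0 : 0 < γ) (h1 : γ < 1) (ha : 0 < a)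
    (hK : ∀ p : ℝ, 0 < p → 2 * a * Real.log p ≤ c * (2 - 2 ^ γ) * p ^ γ + K)
    (hx : 2 ≤ x) (hxy : x ≤ y) (hs : 2 ≤ s) (hs1 : s ≤ x + y) (hs2 : y ≤ s + x) :
    c * s ^ γ - a * Real.log s ≤
      K + ((c * x ^ γ - a * Real.log x) + (c * y ^ γ - a * Real.log y)) := by
  have hx0 : 0 < x := by linarith
  have hy0 : 0 < y := by linarith
  have hs0 : 0 < s := by linarith
  have r1 : s ^ γ ≤ (x + y) ^ γ := Real.rpow_le_rpow hs0.le hs1 h0.le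
  have r2 := mul_le_mul_of_nonneg_left (r1.trans (aux_rpow h0 h1 hx0 hxy)) hc.le
  have l : Real.log (x * y) ≤ Real.log (s * (x * x)) := by
    apply Real.log_le_log (by positivity)
    have : y ≤ s * x := by nlinarith
    nlinarith
  rw [Real.log_mul hx0.ne' hy0.ne', Real.log_mul hs0.ne' (by positivity),
    Real.log_mul hx0.ne' hx0.ne'] at l
  have := mul_le_mul_of_nonneg_left l ha.le
  nlinarith [hK x hx0]


/-- Fix `c > 0`, `γ ∈ (0,1)` and `a > 0`, and define `Ω` on the even integers by
`Ω 0 = 1` and `Ω k = exp (c * |k| ^ γ) * |k| ^ (-a)` for even `k ≠ 0`.  Then `Ω` is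
almost submultiplicative: there is `C ≥ 1` with `Ω (k+m) ≤ C * Ω k * Ω m` for all even
`k, m`.  Moreover, if `a ≤ c * γ * (1-γ) * 2 ^ γ`, then `Ω` is submultiplicative. -/
theorem gevrey_sobolev_weight_almost_submultiplicative
    (c γ a : ℝ) (hc : 0 < c) (hγ : γ ∈ Set.Ioo (0:ℝ) 1) (ha : 0 < a)
    (Ω : ℤ → ℝ) (hΩ0 : Ω 0 = 1)
    (hΩ : ∀ k : ℤ, Even k → k ≠ 0 →
      Ω k = Real.exp (c * |(k:ℝ)| ^ γ) * |(k:ℝ)| ^ (-a)) :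
    (∃ C : ℝ, 1 ≤ C ∧ ∀ k m : ℤ, Even k → Even m → Ω (k + m) ≤ C * Ω k * Ω m) ∧
    (a ≤ c * γ * (1 - γ) * (2:ℝ) ^ γ →
      ∀ k m : ℤ, Even k → Even m → Ω (k + m) ≤ Ω k * Ω m) := by
  obtain ⟨h0, h1⟩ := hγ
  have habs : ∀ k : ℤ, Even k → k ≠ 0 → (2:ℝ) ≤ |(k:ℝ)| := by
    intro k hk hk0
    have : (2:ℤ) ≤ |k| := by
      obtain ⟨r, rfl⟩ := hk
      rcases abs_cases (r + r) with h | h <;> omega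
    exact_mod_cast this
  have hE : ∀ k : ℤ, Even k → k ≠ 0 →
      Ω k = Real.exp (c * |(k:ℝ)| ^ γ - a * Real.log |(k:ℝ)|) := by
    intro k hk hk0
    have hp : 0 < |(k:ℝ)| := by linarith [habs k hk hk0]
    rw [hΩ k hk hk0, Real.rpow_def_of_pos hp (-a), ← Real.exp_add]
    congr 1; ring
  have hpos : ∀ k : ℤ, Even k → 0 < Ω k := by
    intro k hk
    by_cases hk0 : k = 0
    · rw [hk0, hΩ0]; norm_num
    · rw [hE k hk hk0]; positivity
  constructor
  · obtain ⟨K, hK0, hK⟩ := aux_K hc h0 h1 ha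
    have hC : 1 ≤ Real.exp K := Real.one_le_exp hK0
    refine ⟨Real.exp K, hC, fun k m hk hm => ?_⟩
    by_cases hk0 : k = 0
    · subst hk0
      rw [hΩ0, zero_add]
      nlinarith [hpos m hm]
    by_cases hm0 : m = 0
    · subst hm0
      rw [hΩ0, add_zero]
      nlinarith [hpos k hk]
    have bk := habs k hk hk0
    have bm := habs m hm hm0
    rw [hE k hk hk0, hE m hm hm0, mul_assoc, ← Real.exp_add, ← Real.exp_add]
    by_cases hs0 : k + m = 0
    · have : m = -k := by omega
      subst this
      rw [hs0, hΩ0]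
      apply Real.one_le_exp
      push_cast
      rw [abs_neg]
      have hp : 0 < |(k:ℝ)| := by linarith
      have hq : 0 < |(k:ℝ)| ^ γ := by positivity
      have : 0 < c * (2:ℝ) ^ γ * |(k:ℝ)| ^ γ := by positivity
      nlinarith [hK _ hp]
    · have bs := habs (k + m) (hk.add hm) hs0
      rw [hE _ (hk.add hm) hs0, Real.exp_le_exp]
      push_cast at bs ⊢
      have t1 := abs_add_le (k:ℝ) m
      have t2 : |(k:ℝ)| ≤ |(k:ℝ) + m| + |(m:ℝ)| := by
        have := abs_sub ((k:ℝ) + m) m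
        rwa [add_sub_cancel_right] at this
      have t3 : |(m:ℝ)| ≤ |(k:ℝ) + m| + |(k:ℝ)| := by
        have := abs_sub ((k:ℝ) + m) k
        rwa [add_sub_cancel_left] at this
      rcases le_total |(k:ℝ)| |(m:ℝ)| with h | h
      · exact aux_almost hc h0 h1 ha hK bk h bs t1 t3
      · have := aux_almost hc h0 h1 ha hK bm h bs (by linarith) t2
        linarith
  · intro h k m hk hm
    by_cases hk0 : k = 0
    · subst hk0; simp [hΩ0]
    by_cases hm0 : m = 0
    · subst hm0; simp [hΩ0]
    have bk := habs k hk hk0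
    have bm := habs m hm hm0
    rw [hE k hk hk0, hE m hm hm0, ← Real.exp_add]
    by_cases hs0 : k + m = 0
    · rw [hs0, hΩ0]
      apply Real.one_le_exp
      exact add_nonneg (aux_two hc h0 h1 ha h bk) (aux_two hc h0 h1 ha h bm)
    · have bs := habs (k + m) (hk.add hm) hs0
      rw [hE _ (hk.add hm) hs0, Real.exp_le_exp]
      push_cast at bs ⊢
      exact (aux_mono hc h0 h1 h bs (abs_add_le (k:ℝ) m)).trans (aux_sub hc h0 h1 h bk bm)
end

section
/- For every integer n ≥ 1, the sum Σ_j 1/|n² − j²|, taken over all integers j with j ≡ n (mod 2) and j ≠ ±n, satisfies Σ_j 1/|n² − j²| ≤ 2·log(6n)/n. -/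
namespace SumAux

noncomputable def H (n : ℕ) : ℝ := ∑ i ∈ Finset.range n, 1 / ((i:ℝ) + 1)

lemma H_le (n : ℕ) : H n ≤ 1 + Real.log n := by
  have h := harmonic_le_one_add_log n
  have e : ((harmonic n : ℚ) : ℝ) = H n := by
    unfold harmonic H
    push_cast
    simp
  linarith

noncomputable def A (n : ℕ) (m : ℕ) : ℝ := 1 / (4 * ((m:ℝ) + 1) * ((m:ℝ) + 1 + n))

lemma A_nonneg (n m : ℕ) : 0 ≤ A n m := by unfold A; positivity

lemma A_eq (n m : ℕ) (hn : 1 ≤ n) :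
    A n m = (1 / (4 * n)) * (1 / ((m:ℝ) + 1) - 1 / ((m:ℝ) + 1 + n)) := by
  unfold A
  have : (0:ℝ) < n := by exact_mod_cast hn
  have : (0:ℝ) < (m:ℝ) + 1 + n := by positivity
  field_simp
  ring

lemma A_sum_le (n : ℕ) (hn : 1 ≤ n) (N : ℕ) :
    ∑ m ∈ Finset.range N, A n m ≤ H n / (4 * n) := by
  rw [Finset.sum_congr rfl (fun m _ => A_eq n m hn), ← Finset.mul_sum, Finset.sum_sub_distrib]
  have h1 : H (n + N) = H n + ∑ m ∈ Finset.range N, 1 / ((m:ℝ) + 1 + n) := by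
    unfold H
    rw [Finset.sum_range_add]
    congr 1
    apply Finset.sum_congr rfl
    intro i _
    push_cast
    congr 1
    ring
  have h2 : H N ≤ H (n + N) := by
    unfold H
    apply Finset.sum_le_sum_of_subset_of_nonneg
    · intro x; simp; omega
    · intros; positivity
  have h3 : ∑ m ∈ Finset.range N, 1 / ((m:ℝ) + 1) = H N := rfl
  rw [h3, div_eq_mul_one_div (H n), mul_comm (H n)]
  apply mul_le_mul_of_nonneg_left _ (by positivity)
  linarith

noncomputable def g (n : ℕ) (k : ℤ) : ℝ := 1 / (4 * |(k:ℝ)| * |(k:ℝ) + n|)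

lemma g_nonneg (n : ℕ) (k : ℤ) : 0 ≤ g n k := by unfold g; positivity

lemma fin_sum_le (p : ℕ) :
    ∑ m ∈ Finset.range (p+1), g (p+1) (-((m:ℤ)+1)) ≤ H p / (2 * ((p:ℝ)+1)) := by
  rw [Finset.sum_range_succ]
  have h0 : g (p+1) (-((p:ℤ)+1)) = 0 := by unfold g; simp
  have h1 : ∀ m ∈ Finset.range p, g (p+1) (-((m:ℤ)+1)) =
      (1 / (4 * ((p:ℝ)+1))) * (1 / ((m:ℝ)+1) + 1 / (((p - 1 - m : ℕ):ℝ) + 1)) := by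
    intro m hm
    obtain ⟨q, rfl⟩ : ∃ q, p = m + 1 + q := ⟨p - (m+1), by simp at hm; omega⟩
    have e : m + 1 + q - 1 - m = q := by omega
    rw [e]
    unfold g
    push_cast
    have e1 : |(-((m:ℝ)+1))| = (m:ℝ)+1 := by rw [abs_neg, abs_of_nonneg (by positivity)]
    have e2 : |(-((m:ℝ)+1)) + ((m:ℝ)+1+q+1)| = (q:ℝ)+1 := by
      rw [abs_of_nonneg] <;> ring_nf
      positivity
    rw [e1, e2]
    field_simp
    ring
  rw [h0, Finset.sum_congr rfl h1, ← Finset.mul_sum, Finset.sum_add_distrib,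
    Finset.sum_range_reflect (fun m : ℕ => 1 / ((m:ℝ)+1)) p]
  have h3 : ∑ m ∈ Finset.range p, 1 / ((m:ℝ) + 1) = H p := rfl
  rw [h3]
  apply le_of_eq
  field_simp
  ring

lemma main (n : ℕ) (hn : 1 ≤ n) : Summable (g n) ∧ ∑' k, g n k ≤ H n / n := by
  have hA : Summable (A n) := summable_of_sum_range_le (A_nonneg n) (A_sum_le n hn)
  have hAt : ∑' m, A n m ≤ H n / (4 * n) :=
    Real.tsum_le_of_sum_range_le (A_nonneg n) (A_sum_le n hn)
  have e1 : (fun m : ℕ => g n ((m + 1 : ℕ):ℤ)) = A n := by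
    ext m
    unfold g A
    push_cast
    rw [abs_of_nonneg (by positivity), abs_of_nonneg (by positivity)]
  have e2 : (fun m : ℕ => g n (-(((m + n : ℕ):ℤ)+1))) = A n := by
    ext m
    unfold g A
    push_cast
    have a1 : |(-((m:ℝ)+n+1))| = (m:ℝ)+1+n := by
      rw [abs_neg, abs_of_nonneg (by positivity)]; ring
    have a2 : |(-((m:ℝ)+n+1)) + n| = (m:ℝ)+1 := by
      rw [show (-((m:ℝ)+n+1)) + n = -((m:ℝ)+1) by ring, abs_neg, abs_of_nonneg (by positivity)]
    rw [a1, a2]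
    congr 1
    ring
  have s1 : Summable (fun m : ℕ => g n (m:ℤ)) := by
    rw [← summable_nat_add_iff 1]
    rw [e1]; exact hA
  have s2 : Summable (fun m : ℕ => g n (-((m:ℤ)+1))) := by
    rw [← summable_nat_add_iff n]
    rw [e2]; exact hA
  have t1 : ∑' m : ℕ, g n (m:ℤ) = ∑' m, A n m := by
    rw [← s1.sum_add_tsum_nat_add 1, e1]
    simp [g]
  have t2 : ∑' m : ℕ, g n (-((m:ℤ)+1)) =
      ∑ m ∈ Finset.range n, g n (-((m:ℤ)+1)) + ∑' m, A n m := by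
    rw [← s2.sum_add_tsum_nat_add n, e2]
  have hs := HasSum.of_nat_of_neg_add_one s1.hasSum s2.hasSum
  refine ⟨hs.summable, ?_⟩
  rw [hs.tsum_eq, t1, t2]
  obtain ⟨p, rfl⟩ : ∃ p, n = p + 1 := ⟨n - 1, by omega⟩
  have hf := fin_sum_le p
  have hH : H p ≤ H (p+1) := by
    unfold H
    rw [Finset.sum_range_succ]
    have : 0 ≤ 1 / ((p:ℝ)+1) := by positivity
    linarith
  have hf2 : H p / (2 * ((p:ℝ)+1)) ≤ H (p+1) / (2 * ((p:ℝ)+1)) := by gcongr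
  push_cast at *
  have : H (p+1) / ((p:ℝ)+1) = H (p+1) / (4 * ((p:ℝ)+1)) + (H (p+1) / (2 * ((p:ℝ)+1))
    + H (p+1) / (4 * ((p:ℝ)+1))) := by
    field_simp
    ring
  linarith

end SumAux

/-- For every integer `n ≥ 1`, the sum `Σ_j 1/|n² - j²|` over all integers `j` with
`j ≡ n (mod 2)` and `j ≠ ±n` converges and is at most `2 * log (6n) / n`. -/
theorem sum_inv_abs_nsq_sub_jsq_le
    (n : ℕ) (hn : 1 ≤ n) :
    Summable (fun j : {j : ℤ // Even (j - (n:ℤ)) ∧ j ≠ (n:ℤ) ∧ j ≠ -(n:ℤ)} =>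
      1 / |(n:ℝ)^2 - (j.1:ℝ)^2|) ∧
    ∑' j : {j : ℤ // Even (j - (n:ℤ)) ∧ j ≠ (n:ℤ) ∧ j ≠ -(n:ℤ)},
        1 / |(n:ℝ)^2 - (j.1:ℝ)^2| ≤ 2 * Real.log (6 * n) / n := by
  have hnp : (0:ℝ) < n := by exact_mod_cast hn
  obtain ⟨hs, ht⟩ := SumAux.main n hn
  let e : {j : ℤ // Even (j - (n:ℤ)) ∧ j ≠ (n:ℤ) ∧ j ≠ -(n:ℤ)} → ℤ := fun j => (j.1 - n) / 2
  have he : ∀ j, j.1 = n + 2 * e j := by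
    rintro ⟨j, ⟨r, hr⟩, h⟩
    simp only [e]
    omega
  have hinj : Function.Injective e := by
    intro a b hab
    apply Subtype.ext
    rw [he a, he b, hab]
  have hfe : (fun j : {j : ℤ // Even (j - (n:ℤ)) ∧ j ≠ (n:ℤ) ∧ j ≠ -(n:ℤ)} =>
      1 / |(n:ℝ)^2 - (j.1:ℝ)^2|) = SumAux.g n ∘ e := by
    ext j
    have h : (j.1:ℝ) = n + 2 * (e j : ℝ) := by exact_mod_cast he j
    simp only [Function.comp, SumAux.g]
    rw [h, show (n:ℝ)^2 - (n + 2 * (e j : ℝ))^2 = -(4 * (e j : ℝ) * ((e j : ℝ) + n)) by ring,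
      abs_neg, abs_mul, abs_mul, abs_of_pos (by norm_num : (0:ℝ) < 4)]
  rw [hfe]
  refine ⟨hs.comp_injective hinj, ?_⟩
  refine (tsum_comp_le_tsum_of_inj hs (SumAux.g_nonneg n) hinj).trans (ht.trans ?_)
  apply div_le_div_of_nonneg_right _ hnp.le
  have h1 := SumAux.H_le n
  have h2 : 0 ≤ Real.log n := Real.log_nonneg (by exact_mod_cast hn)
  have h3 : 1 ≤ Real.log 6 := by
    rw [Real.le_log_iff_exp_le (by norm_num)]
    linarith [Real.exp_one_lt_d9]
  rw [Real.log_mul (by norm_num) hnp.ne']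
  linarith
end

section
/- Let β be a real number with 1/2 < β < 1. Then there exist constants c₂ ≥ c₁ > 0 (depending only on β) such that for every integer n ≥ 1, c₁·n^{1−2β} ≤ Σ_j 1/|n² − j²|^β ≤ c₂·n^{1−2β}, where the sum runs over all integers j with j ≡ n (mod 2) and j ≠ ±n. -/
lemma aux_tele1 (p : ℝ) (h0 : 0 < p) (h1 : p < 1) (m : ℕ) :
    p * ((m:ℝ)+1) ^ (p - 1) ≤ ((m:ℝ)+1)^p - (m:ℝ)^p := by
  have hm : (0:ℝ) < (m:ℝ)+1 := by positivity
  have hs : (-1:ℝ) ≤ -(1/((m:ℝ)+1)) := by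
    have : 1/((m:ℝ)+1) ≤ 1 := by rw [div_le_one hm]; linarith [Nat.cast_nonneg (α := ℝ) m]
    linarith
  have h := rpow_one_add_le_one_add_mul_self hs h0.le h1.le
  have e : (1 + -(1/((m:ℝ)+1))) = (m:ℝ)/((m:ℝ)+1) := by field_simp; ring
  rw [e, Real.div_rpow (Nat.cast_nonneg m) hm.le, div_le_iff₀ (Real.rpow_pos_of_pos hm p)] at h
  rw [Real.rpow_sub_one hm.ne']
  have : (1 + p * -(1 / ((m:ℝ) + 1))) * ((m:ℝ) + 1) ^ p
    = ((m:ℝ)+1)^p - p * (((m:ℝ)+1)^p / ((m:ℝ)+1)) := by field_simp; ring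
  linarith

lemma aux_tele2 (p : ℝ) (h0 : 0 < p) (h1 : p < 1) (m : ℕ) (hm1 : 1 ≤ m) :
    p * ((m:ℝ)+1) ^ (-p - 1) ≤ (m:ℝ)^(-p) - ((m:ℝ)+1)^(-p) := by
  have h := aux_tele1 p h0 h1 m
  have hm' : (0:ℝ) < m := by exact_mod_cast hm1
  have hm : (0:ℝ) < (m:ℝ)+1 := by positivity
  rw [Real.rpow_sub_one hm.ne'] at h ⊢
  rw [Real.rpow_neg hm.le, Real.rpow_neg hm'.le]
  set A := ((m:ℝ)+1)^p with hA
  set B := (m:ℝ)^p with hB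
  have hAp : 0 < A := Real.rpow_pos_of_pos hm p
  have hBp : 0 < B := Real.rpow_pos_of_pos hm' p
  have hBA : B ≤ A := Real.rpow_le_rpow hm'.le (by linarith) h0.le
  have e : p * (A⁻¹ / ((m:ℝ)+1)) = (p * (A / ((m:ℝ)+1))) / (A * A) := by field_simp
  have e2 : B⁻¹ - A⁻¹ = (A - B) / (A * B) := by field_simp
  rw [e, e2]
  apply div_le_div₀ (by linarith) h (by positivity)
  exact mul_le_mul_of_nonneg_left hBA hAp.le

/-- majorant -/
noncomputable def auxK (β : ℝ) (n m : ℕ) : ℝ := 1 / ((m:ℝ) * max (n:ℝ) (m:ℝ)) ^ β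

lemma auxK_zero (β : ℝ) (hb : β ≠ 0) (n : ℕ) : auxK β n 0 = 0 := by
  simp [auxK, Real.zero_rpow hb]

lemma auxK_nonneg (β : ℝ) (n m : ℕ) : 0 ≤ auxK β n m := by
  unfold auxK; positivity

lemma auxK_part1 (β : ℝ) (h0 : 1/2 < β) (h1 : β < 1) (n : ℕ) (hn : 1 ≤ n) (N : ℕ) (hN : N ≤ n) :
    ∑ m ∈ Finset.range N, auxK β n (m+1) ≤ (n:ℝ)^(-β) * ((N:ℝ)^(1-β) / (1-β)) := by
  have hn0 : (0:ℝ) < n := by exact_mod_cast hn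
  induction N with
  | zero => simp [Real.zero_rpow (show (1-β) ≠ 0 by linarith)]
  | succ N ih =>
    rw [Finset.sum_range_succ]
    have ih := ih (by omega)
    have t := aux_tele1 (1-β) (by linarith) (by linarith) N
    have hmax : max (n:ℝ) ((N+1:ℕ):ℝ) = n := max_eq_left (by exact_mod_cast hN)
    have hK : auxK β n (N+1) = (n:ℝ)^(-β) * ((N:ℝ)+1)^(1-β-1) := by
      unfold auxK
      rw [hmax, Real.mul_rpow (by positivity) hn0.le, show 1-β-1 = -β by ring,
        Real.rpow_neg hn0.le, Real.rpow_neg (by positivity)]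
      push_cast
      field_simp
    rw [hK]
    have hb : 0 < 1-β := by linarith
    have t' : ((N:ℝ)+1)^(1-β-1) ≤ (((N:ℝ)+1)^(1-β) - (N:ℝ)^(1-β))/(1-β) := by
      rw [le_div_iff₀ hb]; linarith
    have t2 := mul_le_mul_of_nonneg_left t' (Real.rpow_nonneg hn0.le (-β))
    push_cast
    rw [sub_div, mul_sub] at t2
    linarith

lemma auxK_part2 (β : ℝ) (h0 : 1/2 < β) (h1 : β < 1) (n : ℕ) (hn : 1 ≤ n) (N : ℕ) (hN : n ≤ N) :
    ∑ m ∈ Finset.range N, auxK β n (m+1) ≤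
      (n:ℝ)^(1-2*β) / (1-β) + ((n:ℝ)^(1-2*β) - (N:ℝ)^(1-2*β)) / (2*β-1) := by
  have hn0 : (0:ℝ) < n := by exact_mod_cast hn
  induction N, hN using Nat.le_induction with
  | base =>
    have := auxK_part1 β h0 h1 n hn n le_rfl
    rw [← mul_div_assoc, ← Real.rpow_add hn0] at this
    rw [show -β + (1-β) = 1-2*β by ring] at this
    simpa using this
  | succ N hN ih =>
    rw [Finset.sum_range_succ]
    have t := aux_tele2 (2*β-1) (by linarith) (by linarith) N (by omega)
    have hmax : max (n:ℝ) ((N+1:ℕ):ℝ) = (N:ℝ)+1 := by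
      rw [max_eq_right (by exact_mod_cast (by omega))]; push_cast; rfl
    have hp : (0:ℝ) < (N:ℝ)+1 := by positivity
    have hK : auxK β n (N+1) = ((N:ℝ)+1)^(-(2*β-1)-1) := by
      unfold auxK
      rw [hmax]
      push_cast
      rw [Real.mul_rpow hp.le hp.le, ← Real.rpow_add hp, show -(2*β-1)-1 = -(β+β) by ring,
        Real.rpow_neg hp.le, one_div]
    rw [hK]
    have hb : 0 < 2*β-1 := by linarith
    rw [show -(2*β-1) = 1-2*β by ring] at t ⊢
    have t' : ((N:ℝ)+1)^(1-2*β-1) ≤ ((N:ℝ)^(1-2*β) - ((N:ℝ)+1)^(1-2*β))/(2*β-1) := by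
      rw [le_div_iff₀ hb]; linarith
    push_cast
    rw [sub_div] at t' ih ⊢
    linarith

lemma auxK_sum (β : ℝ) (h0 : 1/2 < β) (h1 : β < 1) (n : ℕ) (hn : 1 ≤ n) :
    Summable (auxK β n) ∧
      ∑' m, auxK β n m ≤ (1/(1-β) + 1/(2*β-1)) * (n:ℝ)^(1-2*β) := by
  have hn0 : (0:ℝ) < n := by exact_mod_cast hn
  have key : ∀ N, ∑ m ∈ Finset.range N, auxK β n m ≤
      (1/(1-β) + 1/(2*β-1)) * (n:ℝ)^(1-2*β) := by
    intro N
    have a1 : ∑ m ∈ Finset.range N, auxK β n m ≤ ∑ m ∈ Finset.range (n+N+1), auxK β n m :=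
      Finset.sum_le_sum_of_subset_of_nonneg (Finset.range_mono (by omega))
        (fun _ _ _ => auxK_nonneg _ _ _)
    rw [Finset.sum_range_succ', auxK_zero β (by linarith), add_zero] at a1
    have a2 := auxK_part2 β h0 h1 n hn (n+N) (by omega)
    have a3 : 0 ≤ ((n+N:ℕ):ℝ)^(1-2*β) / (2*β-1) :=
      div_nonneg (by positivity) (by linarith)
    rw [sub_div] at a2
    rw [add_mul, one_div_mul_eq_div, one_div_mul_eq_div]
    linarith
  have hs := summable_of_sum_range_le (fun m => auxK_nonneg β n m) key
  exact ⟨hs, Real.tsum_le_of_sum_range_le (fun m => auxK_nonneg β n m) key⟩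

lemma aux_term (β : ℝ) (h0 : 1/2 < β) (n : ℕ) (hn : 1 ≤ n) (j : ℤ)
    (hj : j ≠ n) (hj' : j ≠ -n) :
    1 / |(n:ℝ)^2 - (j:ℝ)^2| ^ β ≤ auxK β n (j - n).natAbs + auxK β n (j + n).natAbs := by
  have hn0 : (0:ℝ) < n := by exact_mod_cast hn
  have gen : ∀ m : ℤ, m ≠ 0 → |(m:ℝ)| * max (n:ℝ) |(m:ℝ)| ≤ |(n:ℝ)^2 - (j:ℝ)^2| →
      1 / |(n:ℝ)^2 - (j:ℝ)^2| ^ β ≤ auxK β n m.natAbs := by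
    intro m hm h
    unfold auxK
    have hc : ((m.natAbs : ℕ):ℝ) = |(m:ℝ)| := by rw [Nat.cast_natAbs]; push_cast; rfl
    rw [hc]
    have hmp : 0 < |(m:ℝ)| := abs_pos.mpr (by exact_mod_cast hm)
    have hp : 0 < |(m:ℝ)| * max (n:ℝ) |(m:ℝ)| := mul_pos hmp (lt_max_of_lt_left hn0)
    exact one_div_le_one_div_of_le (Real.rpow_pos_of_pos hp β)
      (Real.rpow_le_rpow hp.le h (by linarith))
  rcases le_total 0 j with h | h
  · have hjr : (0:ℝ) ≤ j := by exact_mod_cast h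
    have := gen (j-n) (by omega) (by
      push_cast
      rw [show (n:ℝ)^2 - (j:ℝ)^2 = -((j:ℝ)-n) * (j+n) by ring, abs_mul, abs_neg]
      apply mul_le_mul_of_nonneg_left _ (abs_nonneg _)
      rw [abs_of_nonneg (show (0:ℝ) ≤ j + n by linarith)]
      exact max_le (by linarith) (abs_le.mpr ⟨by linarith, by linarith⟩))
    linarith [auxK_nonneg β n (j+n).natAbs]
  · have hjr : (j:ℝ) ≤ 0 := by exact_mod_cast h
    have := gen (j+n) (by omega) (by
      push_cast
      rw [show (n:ℝ)^2 - (j:ℝ)^2 = ((j:ℝ)+n) * (n-j) by ring, abs_mul]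
      apply mul_le_mul_of_nonneg_left _ (abs_nonneg _)
      rw [abs_of_nonneg (show (0:ℝ) ≤ n - j by linarith)]
      exact max_le (by linarith) (abs_le.mpr ⟨by linarith, by linarith⟩))
    linarith [auxK_nonneg β n (j-n).natAbs]

lemma aux_shift (F : ℤ → ℝ) (s : ℝ) (h : HasSum F s) (a : ℤ) : HasSum (fun m => F (m + a)) s := by
  have := (Equiv.addRight a).hasSum_iff.mpr h
  exact this

lemma aux_even (K : ℕ → ℝ) (S : ℝ) (h : HasSum K S) (h0 : K 0 = 0) :
    HasSum (fun m : ℤ => K m.natAbs) (S + S) := by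
  have := HasSum.of_nat_of_neg (f := fun m : ℤ => K m.natAbs) (g := S) (g' := S)
      (by simpa using h) (by simpa using h)
  simpa [h0] using this

lemma aux_major (β : ℝ) (h0 : 1/2 < β) (h1 : β < 1) (n : ℕ) (hn : 1 ≤ n) :
    ∃ (H : ℤ → ℝ) (T : ℝ), HasSum H T ∧ (∀ m, 0 ≤ H m) ∧
      T ≤ (4 * (1/(1-β) + 1/(2*β-1))) * (n:ℝ) ^ (1 - 2*β) ∧
      ∀ j : ℤ, j ≠ n → j ≠ -n → 1 / |(n:ℝ)^2 - (j:ℝ)^2| ^ β ≤ H j := by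
  obtain ⟨hs, hb⟩ := auxK_sum β h0 h1 n hn
  obtain ⟨S, hS⟩ := hs
  rw [hS.tsum_eq] at hb
  have hG := aux_even (auxK β n) S hS (auxK_zero β (by linarith) n)
  have hG1 := aux_shift _ _ hG (-(n:ℤ))
  have hG2 := aux_shift _ _ hG (n:ℤ)
  simp only [← sub_eq_add_neg] at hG1
  refine ⟨_, _, hG1.add hG2, fun m => add_nonneg (auxK_nonneg _ _ _) (auxK_nonneg _ _ _), ?_,
    fun j hj hj' => aux_term β h0 n hn j hj hj'⟩
  rw [mul_assoc]
  linarith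

lemma aux_upper (β : ℝ) (h0 : 1/2 < β) (h1 : β < 1) (n : ℕ) (hn : 1 ≤ n) :
    Summable (fun j : {j : ℤ // Even (j - (n:ℤ)) ∧ j ≠ (n:ℤ) ∧ j ≠ -(n:ℤ)} =>
        1 / |(n:ℝ)^2 - (j.1:ℝ)^2| ^ β) ∧
      (∑' j : {j : ℤ // Even (j - (n:ℤ)) ∧ j ≠ (n:ℤ) ∧ j ≠ -(n:ℤ)},
          1 / |(n:ℝ)^2 - (j.1:ℝ)^2| ^ β)
        ≤ (4 * (1/(1-β) + 1/(2*β-1))) * (n:ℝ) ^ (1 - 2*β) := by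
  obtain ⟨H, T, hH, hHn, hT, hb⟩ := aux_major β h0 h1 n hn
  have hsub : Summable (fun j : {j : ℤ // Even (j - (n:ℤ)) ∧ j ≠ (n:ℤ) ∧ j ≠ -(n:ℤ)} => H j.1) :=
    hH.summable.comp_injective Subtype.val_injective
  have hle : ∀ j : {j : ℤ // Even (j - (n:ℤ)) ∧ j ≠ (n:ℤ) ∧ j ≠ -(n:ℤ)},
      1 / |(n:ℝ)^2 - (j.1:ℝ)^2| ^ β ≤ H j.1 :=
    fun j => hb j.1 j.2.2.1 j.2.2.2
  have hsum := Summable.of_nonneg_of_le (fun j => by positivity) hle hsub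
  refine ⟨hsum, (hsum.tsum_le_tsum hle hsub).trans ?_⟩
  have := tsum_comp_le_tsum_of_inj hH.summable hHn
    (i := fun j : {j : ℤ // Even (j - (n:ℤ)) ∧ j ≠ (n:ℤ) ∧ j ≠ -(n:ℤ)} => j.1)
    Subtype.val_injective
  rw [hH.tsum_eq] at this
  exact le_trans this hT

lemma aux_lower (β : ℝ) (h0 : 1/2 < β) (n : ℕ) (hn : 1 ≤ n)
    (hsum : Summable (fun j : {j : ℤ // Even (j - (n:ℤ)) ∧ j ≠ (n:ℤ) ∧ j ≠ -(n:ℤ)} =>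
        1 / |(n:ℝ)^2 - (j.1:ℝ)^2| ^ β)) :
    (1 / (8:ℝ)^β) * (n:ℝ) ^ (1 - 2*β) ≤
      (∑' j : {j : ℤ // Even (j - (n:ℤ)) ∧ j ≠ (n:ℤ) ∧ j ≠ -(n:ℤ)},
          1 / |(n:ℝ)^2 - (j.1:ℝ)^2| ^ β) := by
  have hn0 : (0:ℝ) < n := by exact_mod_cast hn
  let e : ℕ → {j : ℤ // Even (j - (n:ℤ)) ∧ j ≠ (n:ℤ) ∧ j ≠ -(n:ℤ)} :=
    fun k => ⟨n + 2 * (k+1), ⟨k+1, by ring⟩, by omega, by omega⟩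
  have he : Function.Injective e := by
    intro a b h
    have := congrArg Subtype.val h
    simp only [e] at this
    omega
  refine le_trans ?_ (tsum_comp_le_tsum_of_inj hsum (fun j => by positivity) he)
  refine le_trans ?_ ((hsum.comp_injective he).sum_le_tsum (Finset.range n)
    (fun k _ => by simp only [Function.comp]; positivity))
  have hk : ∀ k ∈ Finset.range n, 1 / (8 * (n:ℝ)^2)^β ≤
      ((fun j : {j : ℤ // Even (j - (n:ℤ)) ∧ j ≠ (n:ℤ) ∧ j ≠ -(n:ℤ)} =>
        1 / |(n:ℝ)^2 - (j.1:ℝ)^2| ^ β) ∘ e) k := by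
    intro k hk
    have hkn : (k:ℝ) + 1 ≤ n := by exact_mod_cast Finset.mem_range.mp hk
    have hk0 : (0:ℝ) ≤ k := Nat.cast_nonneg k
    simp only [Function.comp, e]
    push_cast
    have ee : |(n:ℝ)^2 - ((n:ℝ) + 2*((k:ℝ)+1))^2| = 4 * ((k:ℝ)+1) * (n + (k+1)) := by
      rw [show (n:ℝ)^2 - ((n:ℝ) + 2*((k:ℝ)+1))^2 = -(4 * ((k:ℝ)+1) * (n + (k+1))) by ring,
        abs_neg, abs_of_nonneg (by positivity)]
    rw [ee]
    apply one_div_le_one_div_of_le (Real.rpow_pos_of_pos (by positivity) β)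
    apply Real.rpow_le_rpow (by positivity) _ (by linarith)
    nlinarith
  refine le_trans (le_of_eq ?_) (Finset.sum_le_sum hk)
  rw [Finset.sum_const, Finset.card_range, nsmul_eq_mul, Real.mul_rpow (by norm_num) (by positivity),
    Real.rpow_sub hn0, Real.rpow_one, ← Real.rpow_natCast, ← Real.rpow_mul hn0.le]
  push_cast
  field_simp

/-- For `1/2 < β < 1` there are constants `c₂ ≥ c₁ > 0` (depending only on `β`) such
that for every `n ≥ 1`, `c₁ * n^(1-2β) ≤ Σ_j 1/|n² - j²|^β ≤ c₂ * n^(1-2β)`, the sum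
running over integers `j` with `j ≡ n (mod 2)`, `j ≠ ±n`. -/
theorem sum_inv_abs_nsq_sub_jsq_rpow_asymp
    (β : ℝ) (hβ : β ∈ Set.Ioo (1/2 : ℝ) 1) :
    ∃ c₁ c₂ : ℝ, 0 < c₁ ∧ c₁ ≤ c₂ ∧ ∀ n : ℕ, 1 ≤ n →
      Summable (fun j : {j : ℤ // Even (j - (n:ℤ)) ∧ j ≠ (n:ℤ) ∧ j ≠ -(n:ℤ)} =>
        1 / |(n:ℝ)^2 - (j.1:ℝ)^2| ^ β) ∧
      c₁ * (n:ℝ) ^ (1 - 2*β) ≤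
        (∑' j : {j : ℤ // Even (j - (n:ℤ)) ∧ j ≠ (n:ℤ) ∧ j ≠ -(n:ℤ)},
          1 / |(n:ℝ)^2 - (j.1:ℝ)^2| ^ β) ∧
      (∑' j : {j : ℤ // Even (j - (n:ℤ)) ∧ j ≠ (n:ℤ) ∧ j ≠ -(n:ℤ)},
          1 / |(n:ℝ)^2 - (j.1:ℝ)^2| ^ β) ≤ c₂ * (n:ℝ) ^ (1 - 2*β) := by
  obtain ⟨h0, h1⟩ := hβ
  refine ⟨1 / (8:ℝ)^β, max (1 / (8:ℝ)^β) (4 * (1/(1-β) + 1/(2*β-1))), by positivity,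
    le_max_left _ _, fun n hn => ?_⟩
  obtain ⟨hs, hu⟩ := aux_upper β h0 h1 n hn
  exact ⟨hs, aux_lower β h0 n hn hs,
    hu.trans (mul_le_mul_of_nonneg_right (le_max_right _ _) (by positivity))⟩
end

section
/- Let V : 2ℤ → ℂ be Fourier coefficients of a trigonometric polynomial, i.e. suppose V(k) = 0 for all even k with |k| > M, where M ≥ 0. Then for all integers n ≥ 1 and k ≥ 1 with (k+1)·M < 2n, and for every complex z for which the denominators do not vanish, one has S_k^{21}(n,z) = 0 and S_k^{12}(n,z) = 0. -/
/-- `Adm n j` : the index `j` runs over integers with `j ≡ n (mod 2)`, `j ≠ ±n`. -/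
def Adm (n j : ℤ) : Prop := Even (j - n) ∧ j ≠ n ∧ j ≠ -n

/-- Single term of the series `S_{k+1}^{21}(n,z)` (paper index `k+1 ≥ 1`):
`V(n-j₁)V(j₁-j₂)⋯V(j_k-j_{k+1})V(j_{k+1}+n) / ((n²-j₁²+z)⋯(n²-j_{k+1}²+z))`. -/
noncomputable def term21 (V : ℤ → ℂ) (n : ℤ) (z : ℂ) (k : ℕ) (J : Fin (k+1) → ℤ) : ℂ :=
  (V (n - J 0) * (∏ i : Fin k, V (J i.castSucc - J i.succ)) * V (J (Fin.last k) + n)) /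
    (∏ i : Fin (k+1), ((n:ℂ)^2 - (J i : ℂ)^2 + z))

/-- Single term of the series `S_{k+1}^{12}(n,z)` (paper index `k+1 ≥ 1`):
`V(-n-j₁)V(j₁-j₂)⋯V(j_k-j_{k+1})V(j_{k+1}-n) / ((n²-j₁²+z)⋯(n²-j_{k+1}²+z))`. -/
noncomputable def term12 (V : ℤ → ℂ) (n : ℤ) (z : ℂ) (k : ℕ) (J : Fin (k+1) → ℤ) : ℂ :=
  (V (-n - J 0) * (∏ i : Fin k, V (J i.castSucc - J i.succ)) * V (J (Fin.last k) - n)) /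
    (∏ i : Fin (k+1), ((n:ℂ)^2 - (J i : ℂ)^2 + z))

/-- `S21 V n z k` is the paper's `S_{k+1}^{21}(n,z)`, the sum over all admissible
`j₁, …, j_{k+1}`. -/
noncomputable def S21 (V : ℤ → ℂ) (n : ℤ) (z : ℂ) (k : ℕ) : ℂ :=
  ∑' J : {J : Fin (k+1) → ℤ // ∀ i, Adm n (J i)}, term21 V n z k J.1

/-- `S12 V n z k` is the paper's `S_{k+1}^{12}(n,z)`. -/
noncomputable def S12 (V : ℤ → ℂ) (n : ℤ) (z : ℂ) (k : ℕ) : ℂ :=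
  ∑' J : {J : Fin (k+1) → ℤ // ∀ i, Adm n (J i)}, term12 V n z k J.1

/-- `β_n^+(z) = V(2n) + Σ_{k=1}^∞ S_k^{21}(n,z)`. -/
noncomputable def betaP (V : ℤ → ℂ) (n : ℤ) (z : ℂ) : ℂ :=
  V (2*n) + ∑' k : ℕ, S21 V n z k

/-- `β_n^-(z) = V(-2n) + Σ_{k=1}^∞ S_k^{12}(n,z)`. -/
noncomputable def betaM (V : ℤ → ℂ) (n : ℤ) (z : ℂ) : ℂ :=
  V (-(2*n)) + ∑' k : ℕ, S12 V n z k

/-- A weight: a positive, even function on the even integers with `Ω 0 = 1`,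
nondecreasing on the nonnegative even integers. -/
structure IsWeight (Ω : ℤ → ℝ) : Prop where
  pos : ∀ k : ℤ, Even k → 0 < Ω k
  even : ∀ k : ℤ, Even k → Ω (-k) = Ω k
  one : Ω 0 = 1
  mono : ∀ k m : ℤ, Even k → Even m → 0 ≤ k → k ≤ m → Ω k ≤ Ω m

lemma num_zero_aux
    (V : ℤ → ℂ) (M : ℕ) (hV : ∀ k : ℤ, Even k → (M:ℤ) < |k| → V k = 0)
    (n a b : ℤ) (K : ℕ) (J : Fin (K+1) → ℤ) (hJ : ∀ i, Even (J i - n))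
    (ha : Even (a - n)) (hb : Even (b - n)) (hab : ((K:ℤ) + 2) * M < |a - b|) :
    V (a - J 0) * (∏ i : Fin K, V (J i.castSucc - J i.succ)) * V (J (Fin.last K) - b) = 0 := by
  by_contra h
  have h1 : V (a - J 0) ≠ 0 := fun h0 => h (by rw [h0]; ring)
  have h2 : V (J (Fin.last K) - b) ≠ 0 := fun h0 => h (by rw [h0]; ring)
  have h3 : ∀ i : Fin K, V (J i.castSucc - J i.succ) ≠ 0 := fun i h0 =>
    h (by rw [Finset.prod_eq_zero (Finset.mem_univ i) h0]; ring)
  have key : ∀ x y : ℤ, Even (x - n) → Even (y - n) → V (x - y) ≠ 0 → |x - y| ≤ M := by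
    intro x y hx hy hne
    by_contra hlt
    refine hne (hV _ ?_ (not_le.mp hlt))
    have := hx.sub hy
    rwa [sub_sub_sub_cancel_right] at this
  have hind : ∀ i : Fin (K+1), |a - J i| ≤ ((i : ℕ) + 1 : ℤ) * M := by
    intro i
    induction i using Fin.induction with
    | zero => simpa using key _ _ ha (hJ 0) h1
    | succ i ih =>
      have h4 := key _ _ (hJ _) (hJ _) (h3 i)
      have h5 := abs_sub_le a (J i.castSucc) (J i.succ)
      simp only [Fin.val_castSucc, Fin.val_succ] at ih ⊢
      push_cast
      linarith
  have h6 := hind (Fin.last K)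
  have h7 := key _ _ (hJ _) hb h2
  have h8 := abs_sub_le a (J (Fin.last K)) b
  simp only [Fin.val_last] at h6
  linarith

/-- If `V` are the Fourier coefficients of a trigonometric polynomial, i.e. `V k = 0`
for all even `k` with `|k| > M`, then for all `n ≥ 1` and paper indices `K+1 ≥ 1` with
`((K+1)+1) * M < 2n`, and every `z` for which the denominators do not vanish, one has
`S_{K+1}^{21}(n,z) = 0` and `S_{K+1}^{12}(n,z) = 0`. -/
theorem S_eq_zero_of_trigPoly
    (V : ℤ → ℂ) (M : ℕ) (hV : ∀ k : ℤ, Even k → (M:ℤ) < |k| → V k = 0)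
    (n : ℕ) (hn : 1 ≤ n) (K : ℕ) (hK : (K + 2) * M < 2 * n)
    (z : ℂ) (hz : ∀ j : ℤ, Adm (n:ℤ) j → (n:ℂ)^2 - (j:ℂ)^2 + z ≠ 0) :
    S21 V (n:ℤ) z K = 0 ∧ S12 V (n:ℤ) z K = 0 := by
  have hK' : ((K:ℤ) + 2) * M < 2 * n := by exact_mod_cast hK
  have e : Even (-(n:ℤ) - n) := ⟨-(n:ℤ), by ring⟩
  constructor
  · have : ∀ J : {J : Fin (K+1) → ℤ // ∀ i, Adm (n:ℤ) (J i)}, term21 V n z K J.1 = 0 := by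
      intro J
      have h := num_zero_aux V M hV n n (-n) K J.1 (fun i => (J.2 i).1) (by simp) e
        (by rw [abs_of_nonneg (by omega)]; linarith)
      rw [sub_neg_eq_add] at h
      rw [term21, h, zero_div]
    simp [S21, this]
  · have : ∀ J : {J : Fin (K+1) → ℤ // ∀ i, Adm (n:ℤ) (J i)}, term12 V n z K J.1 = 0 := by
      intro J
      have h := num_zero_aux V M hV n (-n) n K J.1 (fun i => (J.2 i).1) e (by simp)
        (by rw [abs_of_nonpos (by omega)]; linarith)
      rw [term12, h, zero_div]
    simp [S12, this]
end

section
/- Let V : 2ℤ → ℝ be a bounded function on the even integers with V(k) ≥ 0 for all even k > 0 and V(k) ≤ 0 for all even k < 0. Then for every odd integer n = 2p+1 with p ≥ 1, every term of the absolutely convergent sum S_1^{21}(n,0) = Σ_j V(n−j)V(j+n)/(n²−j²) (the sum over integers j with j ≡ n (mod 2), j ≠ ±n) is nonnegative, and consequently S_1^{21}(2p+1, 0) ≥ V(4p)·V(2)/(8p). -/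
/-- Let `V : 2ℤ → ℝ` be bounded on the even integers, with `V k ≥ 0` for even `k > 0`
and `V k ≤ 0` for even `k < 0`.  Then for every odd `n = 2p+1` with `p ≥ 1`, the sum
`S_1^{21}(n,0) = Σ_j V(n-j) V(j+n) / (n² - j²)` (over integers `j ≡ n (mod 2)`,
`j ≠ ±n`) converges absolutely, every term is nonnegative, and consequently
`S_1^{21}(2p+1, 0) ≥ V(4p) V(2) / (8p)`. -/
theorem S1_pos_terms_lower_bound
    (V : ℤ → ℝ) (B : ℝ) (hB : ∀ k : ℤ, Even k → |V k| ≤ B)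
    (hpos : ∀ k : ℤ, Even k → 0 < k → 0 ≤ V k)
    (hneg : ∀ k : ℤ, Even k → k < 0 → V k ≤ 0)
    (p : ℕ) (hp : 1 ≤ p) (n : ℤ) (hn : n = 2 * (p:ℤ) + 1) :
    Summable (fun j : {j : ℤ // Adm n j} =>
      |V (n - j.1) * V (j.1 + n) / ((n:ℝ)^2 - (j.1:ℝ)^2)|) ∧
    (∀ j : {j : ℤ // Adm n j},
      0 ≤ V (n - j.1) * V (j.1 + n) / ((n:ℝ)^2 - (j.1:ℝ)^2)) ∧
    V (4 * (p:ℤ)) * V 2 / (8 * (p:ℝ)) ≤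
      ∑' j : {j : ℤ // Adm n j}, V (n - j.1) * V (j.1 + n) / ((n:ℝ)^2 - (j.1:ℝ)^2) := by
  have hfac : ∀ j : ℤ, V (n - j) * V (j + n) / ((n:ℝ)^2 - (j:ℝ)^2)
      = (V (n - j) / ((n - j : ℤ) : ℝ)) * (V (j + n) / ((j + n : ℤ) : ℝ)) := by
    intro j
    rw [div_mul_div_comm]
    congr 1
    push_cast
    ring
  have hq : ∀ k : ℤ, Even k → 0 ≤ V k / (k : ℝ) := by
    intro k hk
    rcases lt_trichotomy k 0 with h | h | h
    · exact div_nonneg_of_nonpos (hneg k hk h) (by exact_mod_cast h.le)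
    · simp [h]
    · exact div_nonneg (hpos k hk h) (by exact_mod_cast h.le)
  have hev : ∀ j : ℤ, Adm n j → Even (n - j) ∧ Even (j + n) := by
    rintro j ⟨⟨r, hr⟩, -, -⟩
    exact ⟨⟨-r, by omega⟩, ⟨r + n, by omega⟩⟩
  have hnn : ∀ j : {j : ℤ // Adm n j},
      0 ≤ V (n - j.1) * V (j.1 + n) / ((n:ℝ)^2 - (j.1:ℝ)^2) := by
    intro j
    rw [hfac]
    exact mul_nonneg (hq _ (hev _ j.2).1) (hq _ (hev _ j.2).2)
  have hB0 : 0 ≤ B := (abs_nonneg _).trans (hB 0 (by simp))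
  have hs0 : Summable (fun k : ℤ => 1 / (k : ℝ)^2) :=
    Real.summable_one_div_int_pow.mpr (by norm_num)
  have hs1 : Summable (fun j : ℤ => 1 / ((n - j : ℤ) : ℝ)^2) :=
    hs0.comp_injective (i := fun j : ℤ => n - j) (fun a b h => by simpa using h)
  have hs2 : Summable (fun j : ℤ => 1 / ((j + n : ℤ) : ℝ)^2) :=
    hs0.comp_injective (i := fun j : ℤ => j + n) (fun a b h => by simpa using h)
  have hs3 : Summable (fun j : {j : ℤ // Adm n j} =>
      B^2 * (1 / ((n - j.1 : ℤ) : ℝ)^2 + 1 / ((j.1 + n : ℤ) : ℝ)^2)) :=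
    ((hs1.add hs2).mul_left (B^2)).subtype {j : ℤ | Adm n j}
  have hsum : Summable (fun j : {j : ℤ // Adm n j} =>
      V (n - j.1) * V (j.1 + n) / ((n:ℝ)^2 - (j.1:ℝ)^2)) := by
    refine Summable.of_nonneg_of_le hnn ?_ hs3
    intro j
    rw [hfac]
    have hb : ∀ k : ℤ, Even k → (V k / (k : ℝ))^2 ≤ B^2 * (1 / (k : ℝ)^2) := by
      intro k hk
      rw [div_pow, mul_one_div]
      have : V k ^ 2 ≤ B ^ 2 := sq_le_sq' (abs_le.mp (hB k hk)).1 (abs_le.mp (hB k hk)).2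
      gcongr
    have h1 := hb _ (hev _ j.2).1
    have h2 := hb _ (hev _ j.2).2
    rw [mul_add]
    nlinarith [two_mul_le_add_sq (V (n - j.1) / ((n - j.1 : ℤ) : ℝ)) (V (j.1 + n) / ((j.1 + n : ℤ) : ℝ)),
      mul_nonneg (hq _ (hev _ j.2).1) (hq _ (hev _ j.2).2)]
  refine ⟨hsum.abs, hnn, ?_⟩
  have hadm : Adm n (n - 2) := ⟨⟨-1, by omega⟩, by omega, by omega⟩
  have h := hsum.le_tsum ⟨n - 2, hadm⟩ (fun j _ => hnn j)
  refine le_trans (le_of_eq ?_) h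
  have e1 : n - (n - 2) = 2 := by ring
  have e2 : n - 2 + n = 4 * (p : ℤ) := by omega
  simp only [e1, e2]
  rw [mul_comm (V 2)]
  congr 1
  rw [hn]
  push_cast
  ring
end
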